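/- For every nonzero rational integer n ∈ ℤ with gcd(n, 5) = 1, the fraction (5λ⁶)/(nλ⁷) is in reduced form; that is, the reduced factor of 5/(nλ) equals 6 and 5λ⁶ = 5(8λ+5). -/

import Mathlib

/-!
Reduced forms are the vectors in the `G₅`-orbit of `(1, 0)ᵗ`. The group contains the shears
`(x, y) ↦ (x + mλy, y)` and `(x, y) ↦ (x, y + mλx)` for every `m ∈ ℤ`. Applied to
`(5λ⁶, nλ⁷)`, the second one replaces `n` by `n + 5m`, so only the class of `n` modulo `5`
matters, and `n` may be taken to be `±1` or `±2`. In these cases a Euclidean algorithm with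
shears finishes in a few steps: with `s = ±1`,

* `(5λ⁶, sλ⁷) → (-λ³, sλ⁷) → (-λ³, sλ) → (-λ, sλ) → (-λ, -s) → (0, -s)`,
* `(5λ⁶, 2sλ⁷) → (-λ³, 2sλ⁷) → (-λ³, 2sλ) → (1, 2sλ) → (1, 0)`.

The lemmas `orbit_residue_one` and `orbit_residue_two` run these chains backwards.
-/

open Matrix

noncomputable section

/-- `λ = 2 cos(π/5) = (1+√5)/2`. -/
def lam : ℝ := 2 * Real.cos (Real.pi / 5)

/-- The ring `ℤ[λ]`, as a subring of `ℝ`. -/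
def Zlam : Subring ℝ := Subring.closure {lam}

/-- `λ` as an element of `ℤ[λ]`. -/
def lamZ : Zlam := ⟨lam, Subring.subset_closure rfl⟩

/-- `SL(2,ℝ)`. -/
abbrev SL2R := Matrix.SpecialLinearGroup (Fin 2) ℝ

/-- `PSL(2,ℝ)`, realized as `SL(2,ℝ)` modulo its center `{±1}`. -/
abbrev PSL2R := SL2R ⧸ Subgroup.center SL2R

/-- The canonical projection `SL(2,ℝ) → PSL(2,ℝ)`. -/
def toPSL : SL2R →* PSL2R := QuotientGroup.mk' (Subgroup.center SL2R)

/-- The generator `[[1, λ], [0, 1]]` of the Hecke group `G₅`. -/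
def Tgen : SL2R := ⟨!![1, lam; 0, 1], by simp [Matrix.det_fin_two_of]⟩

/-- The generator `[[0, -1], [1, 0]]` of the Hecke group `G₅`. -/
def Sgen : SL2R := ⟨!![0, -1; 1, 0], by simp [Matrix.det_fin_two_of]⟩

/-- The Hecke group `G₅ ≤ PSL(2,ℝ)`, generated by the images of
`[[1, λ], [0, 1]]` and `[[0, -1], [1, 0]]`. -/
def G5 : Subgroup PSL2R := Subgroup.closure {toPSL Tgen, toPSL Sgen}

/-- The subgroup of `SL(2,ℝ)` of matrices with entries in `ℤ[λ]` whose `(2,1)` entry is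
divisible by `τ`. -/
def SL0 (τ : ℝ) : Subgroup SL2R where
  carrier := { A | (∀ i j, A.1 i j ∈ Zlam) ∧ ∃ k ∈ Zlam, A.1 1 0 = τ * k }
  one_mem' := by
    refine ⟨fun i j => ?_, 0, Zlam.zero_mem, by simp⟩
    rcases Decidable.eq_or_ne i j with h | h <;>
      simp [Matrix.one_apply, h, Zlam.one_mem, Zlam.zero_mem]
  mul_mem' := by
    rintro A B ⟨hA, kA, hkA, hA10⟩ ⟨hB, kB, hkB, hB10⟩
    constructor
    · intro i j
      have : (A * B).1 i j = A.1 i 0 * B.1 0 j + A.1 i 1 * B.1 1 j := by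
        simp [Matrix.mul_apply, Fin.sum_univ_two]
      rw [this]
      exact Zlam.add_mem (Zlam.mul_mem (hA i 0) (hB 0 j)) (Zlam.mul_mem (hA i 1) (hB 1 j))
    · refine ⟨kA * B.1 0 0 + A.1 1 1 * kB,
        Zlam.add_mem (Zlam.mul_mem hkA (hB 0 0)) (Zlam.mul_mem (hA 1 1) hkB), ?_⟩
      have : (A * B).1 1 0 = A.1 1 0 * B.1 0 0 + A.1 1 1 * B.1 1 0 := by
        simp [Matrix.mul_apply, Fin.sum_univ_two]
      rw [this, hA10, hB10]; ring
  inv_mem' := by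
    rintro A ⟨hA, kA, hkA, hA10⟩
    rw [Matrix.SpecialLinearGroup.SL2_inv_expl A]
    constructor
    · intro i j
      fin_cases i <;> fin_cases j <;>
        simp [Zlam.neg_mem, hA 0 0, hA 0 1, hA 1 0, hA 1 1]
    · exact ⟨-kA, Zlam.neg_mem hkA, by simp [hA10]⟩

/-- The congruence subgroup `G₀(τ) ≤ G₅`: elements of `G₅` represented by a matrix with
entries in `ℤ[λ]` whose `(2,1)` entry is divisible by `τ`. -/
def G0 (τ : ℝ) : Subgroup PSL2R := G5 ⊓ (SL0 τ).map toPSL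

/-- The principal congruence subgroup `G(ν)` of `G₅` (as a set): elements of `G₅`
represented by a matrix with entries in `ℤ[λ]` that is congruent to `±I` modulo `ν`. -/
def Gp (ν : ℝ) : Set PSL2R :=
  { g | g ∈ G5 ∧ ∃ A : SL2R, toPSL A = g ∧ (∀ i j, A.1 i j ∈ Zlam) ∧
      ((∀ i j, ∃ k ∈ Zlam, A.1 i j - (1 : Matrix (Fin 2) (Fin 2) ℝ) i j = ν * k) ∨
       (∀ i j, ∃ k ∈ Zlam, A.1 i j + (1 : Matrix (Fin 2) (Fin 2) ℝ) i j = ν * k)) }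

/-- `x/y` is in reduced form: `(x, y)ᵗ` is a column of a matrix representing an element
of `G₅`. -/
def IsReducedForm (x y : ℝ) : Prop :=
  ∃ A : SL2R, toPSL A ∈ G5 ∧
    ((A.1 0 0 = x ∧ A.1 1 0 = y) ∨ (A.1 0 1 = x ∧ A.1 1 1 = y))

/-- `g` is a gcd of `a` and `b` in `ℤ[λ]` (well defined up to units). -/
def IsGCDOf (g a b : Zlam) : Prop := g ∣ a ∧ g ∣ b ∧ ∀ d : Zlam, d ∣ a → d ∣ b → d ∣ g

/-- `gcd(a, b)` is a unit in `ℤ[λ]`. -/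
def CoprimeZ (a b : Zlam) : Prop := ∀ d : Zlam, d ∣ a → d ∣ b → IsUnit d

/-- `b = [τ]`: `(b)` is the largest ideal of `ℤ[λ]` with `(b²) ⊆ (τ)`. -/
def IsRadOf (τ b : Zlam) : Prop := τ ∣ b ^ 2 ∧ ∀ s : Zlam, τ ∣ s ^ 2 → b ∣ s

/-- `r ∈ ℤ[λ]` is `G₅`-elementary: whenever `x/(r·y)` is in reduced form,
`x² ≡ 1 (mod r)`. -/
def G5Elementary (r : Zlam) : Prop :=
  ∀ x y : Zlam, IsReducedForm (x : ℝ) ((r : ℝ) * (y : ℝ)) → r ∣ (x ^ 2 - 1)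

end

theorem lam_sq : lam ^ 2 = lam + 1 := by
  have h5 : Real.sqrt 5 ^ 2 = 5 := Real.sq_sqrt (by norm_num)
  unfold lam
  rw [Real.cos_pi_div_five]
  linear_combination h5 / 4

/-- The vector `(x, y)ᵗ` is the first column of a matrix representing an element of `G₅`. -/
def InOrbit (x y : ℝ) : Prop :=
  ∃ A : SL2R, toPSL A ∈ G5 ∧ A.1 0 0 = x ∧ A.1 1 0 = y

theorem InOrbit.one_zero : InOrbit 1 0 :=
  ⟨1, by rw [map_one]; exact G5.one_mem, by simp, by simp⟩

theorem InOrbit.left_mul {x y : ℝ} (h : InOrbit x y) (B : SL2R) (hB : toPSL B ∈ G5) :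
    InOrbit (B.1 0 0 * x + B.1 0 1 * y) (B.1 1 0 * x + B.1 1 1 * y) := by
  obtain ⟨A, hA, rfl, rfl⟩ := h
  refine ⟨B * A, by rw [map_mul]; exact G5.mul_mem hB hA, ?_, ?_⟩ <;>
    simp [Matrix.mul_apply, Fin.sum_univ_two]

theorem Tgen_mem : toPSL Tgen ∈ G5 := Subgroup.subset_closure (by simp)

theorem Sgen_mem : toPSL Sgen ∈ G5 := Subgroup.subset_closure (by simp)

theorem InOrbit.swap {x y : ℝ} (h : InOrbit x y) : InOrbit (-y) x := by
  simpa [Sgen] using h.left_mul Sgen Sgen_mem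

theorem InOrbit.neg {x y : ℝ} (h : InOrbit x y) : InOrbit (-x) (-y) := h.swap.swap

theorem InOrbit.shear_nat {x y : ℝ} (h : InOrbit x y) (m : ℕ) :
    InOrbit (x + m * lam * y) y := by
  induction m with
  | zero => simpa using h
  | succ m ih =>
    have h1 := ih.left_mul Tgen Tgen_mem
    simp only [Tgen, Matrix.of_apply, Matrix.cons_val', Matrix.cons_val_zero,
      Matrix.cons_val_one, Matrix.cons_val_fin_one] at h1
    convert h1 using 1
    · push_cast; ring
    · ring

theorem InOrbit.shear_neg_nat {x y : ℝ} (h : InOrbit x y) (m : ℕ) :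
    InOrbit (x - m * lam * y) y := by
  induction m with
  | zero => simpa using h
  | succ m ih =>
    have h1 := ih.left_mul Tgen⁻¹ (by rw [map_inv]; exact G5.inv_mem Tgen_mem)
    rw [Matrix.SpecialLinearGroup.SL2_inv_expl] at h1
    simp only [Tgen, Matrix.of_apply, Matrix.cons_val', Matrix.cons_val_zero,
      Matrix.cons_val_one, Matrix.cons_val_fin_one] at h1
    convert h1 using 1
    · push_cast; ring
    · ring

/-- Upper triangular shear; the target is matched up to equality of its first coordinate. -/
theorem InOrbit.upper {x y : ℝ} (h : InOrbit x y) (m : ℤ) {x' : ℝ}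
    (hx : x' = x + m * lam * y) : InOrbit x' y := by
  subst hx
  obtain ⟨k, rfl | rfl⟩ := m.eq_nat_or_neg
  · simpa using h.shear_nat k
  · simpa [sub_eq_add_neg] using h.shear_neg_nat k

/-- Lower triangular shear; the target is matched up to equality of its second coordinate. -/
theorem InOrbit.lower {x y : ℝ} (h : InOrbit x y) (m : ℤ) {y' : ℝ}
    (hy : y' = y + m * lam * x) : InOrbit x y' := by
  -- conjugating the upper shear by the rotation reverses its sign
  have h1 : InOrbit (-y') x := h.swap.upper (-m) (by rw [hy]; simp; ring)
  simpa using h1.swap.neg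

theorem lam_pow_three : lam ^ 3 = 2 * lam + 1 := by linear_combination (lam + 1) * lam_sq

theorem lam_pow_four : lam ^ 4 = 3 * lam + 2 := by
  linear_combination lam * lam_pow_three + 2 * lam_sq

theorem lam_pow_five : lam ^ 5 = 5 * lam + 3 := by
  linear_combination lam * lam_pow_four + 3 * lam_sq

theorem lam_pow_six : lam ^ 6 = 8 * lam + 5 := by
  linear_combination lam * lam_pow_five + 5 * lam_sq

theorem lam_pow_seven : lam ^ 7 = 13 * lam + 8 := by
  linear_combination lam * lam_pow_six + 8 * lam_sq

theorem orbit_residue_one (s : ℤ) (hs : s = 1 ∨ s = -1) :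
    InOrbit (5 * lam ^ 6) (s * lam ^ 7) := by
  have h0 : InOrbit 0 (-s) := by
    rcases hs with rfl | rfl
    · simpa using InOrbit.one_zero.swap.neg
    · simpa using InOrbit.one_zero.swap
  have hs2 : (s : ℝ) ^ 2 = 1 := by rcases hs with rfl | rfl <;> norm_num
  have h1 : InOrbit (-lam) (-s) := h0.upper s (by linear_combination lam * hs2)
  have h2 : InOrbit (-lam) (s * lam) :=
    h1.lower (-s) (by push_cast; linear_combination (-s : ℝ) * lam_sq)
  have h3 : InOrbit (-lam ^ 3) (s * lam) :=
    h2.upper (-s) (by push_cast; linear_combination lam ^ 2 * hs2 - lam * lam_sq)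
  have h4 : InOrbit (-lam ^ 3) (s * lam ^ 7) :=
    h3.lower (-(4 * s)) (by
      push_cast
      linear_combination (s : ℝ) * lam_pow_seven - 4 * (s : ℝ) * lam_pow_four)
  exact h4.upper (2 * s) (by
    push_cast
    linear_combination (-2) * lam ^ 8 * hs2 + 5 * lam_pow_six + lam_pow_three
      - 2 * lam * lam_pow_seven - 26 * lam_sq)

theorem orbit_residue_two (s : ℤ) (hs : s = 1 ∨ s = -1) :
    InOrbit (5 * lam ^ 6) (2 * s * lam ^ 7) := by
  have hs2 : (s : ℝ) ^ 2 = 1 := by rcases hs with rfl | rfl <;> norm_num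
  have h1 : InOrbit 1 (2 * s * lam) :=
    InOrbit.one_zero.lower (2 * s) (by push_cast; ring)
  have h2 : InOrbit (-lam ^ 3) (2 * s * lam) :=
    h1.upper (-s) (by
      push_cast
      linear_combination 2 * lam ^ 2 * hs2 - lam_pow_three + 2 * lam_sq)
  have h3 : InOrbit (-lam ^ 3) (2 * s * lam ^ 7) :=
    h2.lower (-(8 * s)) (by
      push_cast
      linear_combination 2 * (s : ℝ) * lam_pow_seven - 8 * (s : ℝ) * lam_pow_four)
  exact h3.upper s (by
    linear_combination (-2) * lam ^ 8 * hs2 + 5 * lam_pow_six + lam_pow_three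
      - 2 * lam * lam_pow_seven - 26 * lam_sq)

/-- For `n ∈ ℤ` nonzero with `gcd(n, 5) = 1`, the fraction `(5λ⁶)/(nλ⁷)` is in reduced
form (so the reduced factor of `5/(nλ)` is `6`), and `5λ⁶ = 5(8λ+5)`. -/
theorem reduced_form_five (n : ℤ) (hn : n ≠ 0) (hco : Int.gcd n 5 = 1) :
    IsReducedForm (5 * lam ^ 6) ((n : ℝ) * lam ^ 7) ∧
    5 * lam ^ 6 = 5 * (8 * lam + 5) := by
  refine ⟨?_, by rw [lam_pow_six]⟩
  have h5 : ¬ (5 : ℤ) ∣ n := by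
    intro h
    have h1 : (Int.gcd n 5 : ℤ) = 5 := Int.gcd_eq_right (by norm_num) h
    omega
  suffices h : InOrbit (5 * lam ^ 6) (n * lam ^ 7) by
    obtain ⟨A, hA, h0, h1⟩ := h
    exact ⟨A, hA, Or.inl ⟨h0, h1⟩⟩
  have key : ∃ k : ℤ, n = 5 * k + 1 ∨ n = 5 * k + 2 ∨ n = 5 * k - 2 ∨ n = 5 * k - 1 :=
    ⟨(n + 2) / 5, by omega⟩
  obtain ⟨k, rfl | rfl | rfl | rfl⟩ := key
  · exact (orbit_residue_one 1 (by simp)).lower k (by push_cast; ring)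
  · exact (orbit_residue_two 1 (by simp)).lower k (by push_cast; ring)
  · exact (orbit_residue_two (-1) (by simp)).lower k (by push_cast; ring)
  · exact (orbit_residue_one (-1) (by simp)).lower k (by push_cast; ring)
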